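/- Let q be a prime power with q > 2 and let S be an algebraic hypersurface of PG(6,q^2) of degree q+1 defined over GF(q^2), not containing any solid, with exactly q^11 + q^9 + q^7 + q^4 + q^2 + 1 rational points. Let Sigma_3 be a solid with |S ∩ Sigma_3| = q^4 + q^2 + 1, so that Pi := S ∩ Sigma_3 is a plane. Then every solid of PG(6,q^2) containing the plane Pi and different from Sigma_3 meets S in exactly q^5 + q^4 + q^2 + 1 rational points. -/

import Mathlib

open MvPolynomial Module

/-- The set of points of the projective subspace of `PG(n-1, F)` determined by
the linear subspace `W` of `F^n`. -/
def projPts {F : Type} [Field F] {n : ℕ} (W : Submodule F (Fin n → F)) :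
    Set (Projectivization F (Fin n → F)) :=
  {P | P.submodule ≤ W}

/-- The set of `F`-rational points of the hypersurface of `PG(n-1, F)` defined by the
homogeneous polynomial `f`. -/
def hypersurfacePts {F : Type} [Field F] {n : ℕ} (f : MvPolynomial (Fin n) F) :
    Set (Projectivization F (Fin n → F)) :=
  {P | MvPolynomial.eval P.rep f = 0}

/-!
Let `Q` be the plane `W ∩ Σ₃`; comparing cardinalities, `S ∩ Σ₃ = Q`. A solid `U ⊃ Q` not
contained in `S` meets `S` in the zero locus of a nonzero form of degree `q + 1` that vanishes on
the plane `Q`. Dehomogenizing with respect to `Q` kills the top-degree part, so `S ∩ (U \ Q)` is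
the zero locus of a nonzero polynomial of degree at most `q` on an affine 3-space, and has at most
`q⁵` points by the Schwartz-Zippel lemma. The solids through `Q` other than `Σ₃` cover `S \ Q`, and
there are `q⁶ + q⁴ + q²` of them, while `|S \ Q| = q¹¹ + q⁹ + q⁷ = q⁵ (q⁶ + q⁴ + q²)`; hence
equality holds for each of them.
-/

lemma ncard_eq_of_subset_biUnion_of_card_mul_le {α ι : Type*} [Finite α] {T : Set α}
    {t : Finset ι} {s : ι → Set α} {c : ℕ} (hcover : T ⊆ ⋃ i ∈ t, s i)
    (hle : ∀ i ∈ t, (s i).ncard ≤ c) (hcard : t.card * c ≤ T.ncard) :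
    ∀ i ∈ t, (s i).ncard = c := by
  refine (Finset.sum_eq_sum_iff_of_le hle).1 (le_antisymm (Finset.sum_le_sum hle) ?_)
  calc ∑ _ ∈ t, c = t.card * c := by rw [Finset.sum_const, smul_eq_mul]
    _ ≤ T.ncard := hcard
    _ ≤ (⋃ i ∈ t, s i).ncard := Set.ncard_le_ncard hcover
    _ ≤ ∑ i ∈ t, (s i).ncard := Finset.set_ncard_biUnion_le t s

section Subspaces

variable {F V : Type*} [DivisionRing F] [AddCommGroup V] [Module F V]
  {Q U W W' : Submodule F V} {v : V}

lemma span_singleton_sup_eq_of_covBy (h : Q ⋖ U) (hvU : v ∈ U) (hvQ : v ∉ Q) :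
    F ∙ v ⊔ Q = U :=
  have hle : F ∙ v ⊔ Q ≤ U := sup_le ((Submodule.span_singleton_le_iff_mem v U).2 hvU) h.le
  (h.eq_or_eq le_sup_right hle).resolve_left (Submodule.covBy_span_singleton_sup hvQ).ne'

lemma covBy_iff_le_and_finrank_eq [FiniteDimensional F V] :
    Q ⋖ U ↔ Q ≤ U ∧ finrank F U = finrank F Q + 1 := by
  constructor
  · intro h
    obtain ⟨v, hvU, hvQ⟩ := SetLike.exists_of_lt h.lt
    refine ⟨h.le, ?_⟩
    rw [← span_singleton_sup_eq_of_covBy h hvU hvQ, sup_comm,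
      Submodule.finrank_sup_span_singleton hvQ]
  · rintro ⟨hle, hrank⟩
    refine ⟨lt_of_le_of_ne hle (by rintro rfl; omega), fun R hQR hRU => ?_⟩
    have := Submodule.finrank_lt_finrank_of_lt hQR
    have := Submodule.finrank_lt_finrank_of_lt hRU
    omega

lemma finrank_inf_lt_of_ne [FiniteDimensional F V] (hrank : finrank F W = finrank F W')
    (hne : W ≠ W') : finrank F ↥(W ⊓ W') < finrank F W := by
  refine Submodule.finrank_lt_finrank_of_lt (lt_of_le_of_ne inf_le_left fun h => hne ?_)
  exact Submodule.eq_of_le_of_finrank_eq (inf_eq_left.1 h) hrank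

lemma covBy_iff_mem_range_comap_mkQ :
    Q ⋖ U ↔ U ∈ Set.range fun L : Projectivization F (V ⧸ Q) => L.submodule.comap Q.mkQ := by
  constructor
  · intro h
    obtain ⟨v, hvU, hvQ⟩ := SetLike.exists_of_lt h.lt
    refine ⟨.mk F (Q.mkQ v) (by simpa using hvQ), ?_⟩
    dsimp only
    rw [Projectivization.submodule_mk, ← span_singleton_sup_eq_of_covBy h hvU hvQ, sup_comm,
      ← Submodule.comap_map_mkQ, Submodule.map_span, Set.image_singleton]
  · rintro ⟨L, rfl⟩
    have hatom : ⊥ ⋖ L.submodule :=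
      bot_covBy_iff.2 (Submodule.isAtom_iff_finrank_eq_one.2 L.finrank_submodule)
    simpa using Submodule.comap_covBy_of_surjective Q.mkQ_surjective hatom

lemma ncard_setOf_covBy {F V : Type*} [Field F] [Finite F] [AddCommGroup V] [Module F V]
    (Q : Submodule F V) :
    {U | Q ⋖ U}.ncard = ∑ i ∈ Finset.range (finrank F (V ⧸ Q)), Nat.card F ^ i := by
  have hinj : Function.Injective
      fun L : Projectivization F (V ⧸ Q) => L.submodule.comap Q.mkQ :=
    (Submodule.comap_injective_of_surjective Q.mkQ_surjective).comp
      Projectivization.submodule_injective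
  rw [← Projectivization.card_of_finrank F (V ⧸ Q) rfl, ← Set.ncard_univ,
    ← Set.ncard_image_of_injective _ hinj, Set.image_univ]
  exact congrArg Set.ncard (Set.ext fun U => covBy_iff_mem_range_comap_mkQ)

/- The hyperplane `x₀ = 0` is sent to `Q`, and the affine chart `x₀ = 1` represents the points of
`U` outside `Q`. -/
lemma exists_linearMap_of_covBy [FiniteDimensional F V] (h : Q ⋖ U) :
    ∃ φ : (Fin (finrank F Q + 1) → F) →ₗ[F] V, (∀ x, φ (Fin.cons 0 x) ∈ Q) ∧
      ∀ u ∈ U, u ∉ Q → ∃ x, F ∙ u = F ∙ φ (Fin.cons 1 x) := by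
  obtain ⟨v, hvU, hvQ⟩ := SetLike.exists_of_lt h.lt
  let e : (Fin (finrank F Q) → F) ≃ₗ[F] Q := (finBasis F Q).equivFun.symm
  let φ : (Fin (finrank F Q + 1) → F) →ₗ[F] V :=
    (LinearMap.proj 0).smulRight v + Q.subtype ∘ₗ e.toLinearMap ∘ₗ LinearMap.funLeft F F Fin.succ
  have hφ (t : F) (x : Fin (finrank F Q) → F) : φ (Fin.cons t x) = t • v + e x := rfl
  refine ⟨φ, fun x => by simp [hφ], fun u huU huQ => ?_⟩
  rw [← span_singleton_sup_eq_of_covBy h hvU hvQ] at huU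
  obtain ⟨_, hav, w, hw, rfl⟩ := Submodule.mem_sup.1 huU
  obtain ⟨a, rfl⟩ := Submodule.mem_span_singleton.1 hav
  have ha : a ≠ 0 := by
    rintro rfl
    exact huQ (by simpa using hw)
  refine ⟨e.symm (a⁻¹ • ⟨w, hw⟩), ?_⟩
  have hchart : φ (Fin.cons 1 (e.symm (a⁻¹ • ⟨w, hw⟩))) = a⁻¹ • (a • v + w) := by
    simp [hφ, smul_smul, ha]
  rw [hchart, Submodule.span_singleton_smul_eq (inv_ne_zero ha).isUnit]

end Subspaces

section Polynomials

/-- The dehomogenization `g(1, X₀, …, Xₙ₋₁)` of `g(X₀, …, Xₙ)` with respect to its first variable: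
the restriction of `g` to the affine chart in which that variable is `1`. -/
noncomputable def dehomogenize {R : Type*} [CommSemiring R] {n : ℕ}
    (g : MvPolynomial (Fin (n + 1)) R) : MvPolynomial (Fin n) R :=
  (finSuccEquiv R n g).eval 1

lemma eval_dehomogenize {R : Type*} [CommSemiring R] {n : ℕ} (g : MvPolynomial (Fin (n + 1)) R)
    (x : Fin n → R) : eval x (dehomogenize g) = eval (Fin.cons 1 x) g := by
  rw [eval_eq_eval_mv_eval', dehomogenize, ← Polynomial.eval_map_apply, map_one]

lemma totalDegree_dehomogenize_le {R : Type*} [CommSemiring R] {n d : ℕ}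
    {g : MvPolynomial (Fin (n + 1)) R} (hg : g.IsHomogeneous (d + 1))
    (hg₀ : (finSuccEquiv R n g).coeff 0 = 0) : (dehomogenize g).totalDegree ≤ d := by
  rw [dehomogenize, Polynomial.eval_eq_sum]
  refine totalDegree_finsetSum_le fun i hi => ?_
  simp only [one_pow, mul_one]
  have hi_ne : i ≠ 0 := by
    rintro rfl
    exact Polynomial.mem_support_iff.1 hi hg₀
  have hi_le : i ≤ d + 1 := calc
    i ≤ (finSuccEquiv R n g).natDegree := Polynomial.le_natDegree_of_mem_supp i hi
    _ = g.degreeOf 0 := natDegree_finSuccEquiv g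
    _ ≤ g.totalDegree := degreeOf_le_totalDegree g 0
    _ ≤ d + 1 := hg.totalDegree_le
  have := (hg.finSuccEquiv_coeff_isHomogeneous i (d + 1 - i) (by omega)).totalDegree_le
  omega

lemma finSuccEquiv_coeff_zero_eq_zero {R : Type*} [CommRing R] [IsDomain R] {n d : ℕ}
    {g : MvPolynomial (Fin (n + 1)) R} (hg : g.IsHomogeneous d) (hd : d ≤ Cardinal.mk R)
    (hvanish : ∀ x : Fin n → R, eval (Fin.cons 0 x) g = 0) :
    (finSuccEquiv R n g).coeff 0 = 0 := by
  have hcoeff := hg.finSuccEquiv_coeff_isHomogeneous 0 d (zero_add d)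
  refine hcoeff.eq_zero_of_forall_eval_eq_zero_of_le_card (fun x => ?_) hd
  rw [← hvanish x, eval_eq_eval_mv_eval', ← Polynomial.coeff_zero_eq_eval_zero,
    Polynomial.coeff_map]

lemma ncard_zeros_mul_card_le {F : Type*} [Field F] [Finite F] {n : ℕ}
    {p : MvPolynomial (Fin n) F} (hp : p ≠ 0) :
    {x | eval x p = 0}.ncard * Nat.card F ≤ p.totalDegree * Nat.card F ^ n := by
  classical
  have := Fintype.ofFinite F
  have hF : (0 : ℚ≥0) < Nat.card F := by exact_mod_cast Nat.card_pos
  have hSZ := schwartz_zippel_totalDegree hp (Finset.univ : Finset F)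
  rw [Fintype.piFinset_univ, ← Set.ncard_coe_finset, Finset.coe_filter_univ, Finset.card_univ,
    ← Nat.card_eq_fintype_card, div_le_div_iff₀ (pow_pos hF n) hF] at hSZ
  exact_mod_cast hSZ

lemma ncard_zeros_cons_one_mul_card_le {F : Type*} [Field F] [Finite F] {n d : ℕ}
    {g : MvPolynomial (Fin (n + 1)) F} (hg : g.IsHomogeneous (d + 1)) (hd : d + 1 ≤ Nat.card F)
    (hvanish : ∀ x : Fin n → F, eval (Fin.cons 0 x) g = 0)
    (hne : ∃ x : Fin n → F, eval (Fin.cons 1 x) g ≠ 0) :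
    {x : Fin n → F | eval (Fin.cons 1 x) g = 0}.ncard * Nat.card F ≤ d * Nat.card F ^ n := by
  have hd' : ((d + 1 : ℕ) : Cardinal) ≤ Cardinal.mk F := by
    rw [← Nat.cast_card]
    exact_mod_cast hd
  have hdeg : (dehomogenize g).totalDegree ≤ d :=
    totalDegree_dehomogenize_le hg (finSuccEquiv_coeff_zero_eq_zero hg hd' hvanish)
  simp only [← eval_dehomogenize] at hne ⊢
  obtain ⟨x, hx⟩ := hne
  have hne₀ : dehomogenize g ≠ 0 := by
    intro h
    exact hx (by rw [h, map_zero])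
  exact (ncard_zeros_mul_card_le hne₀).trans (Nat.mul_le_mul_right _ hdeg)

lemma exists_isHomogeneous_eval_eq_eval_linearMap {R : Type*} [CommRing R] {m n d : ℕ}
    {f : MvPolynomial (Fin n) R} (hf : f.IsHomogeneous d) (φ : (Fin m → R) →ₗ[R] Fin n → R) :
    ∃ g : MvPolynomial (Fin m) R, g.IsHomogeneous d ∧ ∀ x, eval x g = eval (φ x) f := by
  let l := (LinearMap.toMatrix' φ).toMvPolynomial
  refine ⟨bind₁ l f, ?_, fun x => ?_⟩
  · rw [← one_mul d]
    exact hf.aeval l (Matrix.toMvPolynomial_isHomogeneous _)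
  · have hl : (fun i => eval x (l i)) = φ x := funext fun i => by
      rw [Matrix.toMvPolynomial_eval_eq_apply, LinearMap.toMatrix'_mulVec]
    rw [← hl]
    exact eval₂Hom_bind₁ _ _ _ _

lemma eval_smul_of_isHomogeneous {R σ : Type*} [CommSemiring R] {d : ℕ} {f : MvPolynomial σ R}
    (hf : f.IsHomogeneous d) (a : R) (v : σ → R) : eval (a • v) f = a ^ d * eval v f := by
  rw [eval_eq, eval_eq, Finset.mul_sum]
  refine Finset.sum_congr rfl fun s hs => ?_
  have hs_deg : ∑ i ∈ s.support, s i = d := by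
    rw [← Finsupp.degree_apply, Finsupp.degree_eq_weight_one]
    exact hf (mem_support_iff.1 hs)
  simp only [Pi.smul_apply, smul_eq_mul, mul_pow, Finset.prod_mul_distrib]
  rw [Finset.prod_pow_eq_pow_sum, hs_deg]
  ring

end Polynomials

section ProjectivePoints

variable {F : Type} [Field F] {n d : ℕ} {Q U W W' : Submodule F (Fin n → F)}
  {P : Projectivization F (Fin n → F)} {f : MvPolynomial (Fin n) F}

lemma mem_projPts_iff_rep_mem : P ∈ projPts W ↔ P.rep ∈ W := by
  simp [projPts, Projectivization.submodule_eq]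

lemma projPts_mono (h : W ≤ W') : projPts W ⊆ projPts W' := fun _ hP => le_trans hP h

lemma projPts_inf : projPts (W ⊓ W') = projPts W ∩ projPts W' := by
  ext P
  simp only [projPts, Set.mem_inter_iff, Set.mem_ofPred_eq, le_inf_iff]

lemma projPts_eq_range_map :
    projPts W = Set.range (Projectivization.map W.subtype W.injective_subtype) := by
  ext P
  constructor
  · intro hP
    refine ⟨.mk F ⟨P.rep, mem_projPts_iff_rep_mem.1 hP⟩ (by simpa using P.rep_nonzero), ?_⟩
    exact P.mk_rep
  · rintro ⟨L, rfl⟩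
    induction L with
    | h w => simp [projPts, Projectivization.map_mk, Projectivization.submodule_mk]

lemma ncard_projPts [Finite F] (W : Submodule F (Fin n → F)) :
    (projPts W).ncard = ∑ i ∈ Finset.range (finrank F W), Nat.card F ^ i := by
  rw [projPts_eq_range_map, ← Set.image_univ,
    Set.ncard_image_of_injective _ (Projectivization.map_injective _ _), Set.ncard_univ,
    Projectivization.card_of_finrank F W rfl]

lemma exists_covBy_mem_projPts (hP : P ∉ projPts Q) : ∃ U, Q ⋖ U ∧ P ∈ projPts U := by
  rw [mem_projPts_iff_rep_mem] at hP
  refine ⟨F ∙ P.rep ⊔ Q, Submodule.covBy_span_singleton_sup hP, ?_⟩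
  exact mem_projPts_iff_rep_mem.2 (Submodule.mem_sup_left (Submodule.mem_span_singleton_self _))

lemma projPts_inf_eq_and_finrank_inf_eq [Finite F] {k : ℕ}
    {T : Set (Projectivization F (Fin n → F))} (hW : finrank F W = k + 2)
    (hW' : finrank F W' = k + 2) (hne : W ≠ W') (hTW : T ⊆ projPts W) (hTW' : T ⊆ projPts W')
    (hT : T.ncard = ∑ i ∈ Finset.range (k + 1), Nat.card F ^ i) :
    projPts (W ⊓ W') = T ∧ finrank F ↥(W ⊓ W') = k + 1 := by
  have hTQ : T ⊆ projPts (W ⊓ W') := (Set.subset_inter hTW hTW').trans projPts_inf.ge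
  have hcard := Set.ncard_le_ncard hTQ
  have hlt : finrank F ↥(W ⊓ W') < k + 2 := hW ▸ finrank_inf_lt_of_ne (hW.trans hW'.symm) hne
  have hge : k + 1 ≤ finrank F ↥(W ⊓ W') := by
    by_contra! hlow
    rw [ncard_projPts, hT] at hcard
    refine hcard.not_gt (Finset.sum_lt_sum_of_subset (Finset.range_mono hlow.le)
      (Finset.mem_range.2 hlow) Finset.notMem_range_self (pow_pos Nat.card_pos _)
      fun _ _ _ => Nat.zero_le _)
  have hrank : finrank F ↥(W ⊓ W') = k + 1 := by omega
  refine ⟨(Set.eq_of_subset_of_ncard_le hTQ ?_).symm, hrank⟩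
  rw [ncard_projPts, hrank, hT]

lemma mem_hypersurfacePts_iff_of_submodule_eq (hf : f.IsHomogeneous d) {w : Fin n → F}
    (hw : P.submodule = F ∙ w) : P ∈ hypersurfacePts f ↔ eval w f = 0 := by
  obtain ⟨a, ha⟩ : ∃ a : F, a • w = P.rep := by
    rw [← Submodule.mem_span_singleton, ← hw, P.submodule_eq]
    exact Submodule.mem_span_singleton_self _
  have ha₀ : a ≠ 0 := by
    rintro rfl
    exact P.rep_nonzero (by rw [← ha, zero_smul])
  simp [hypersurfacePts, ← ha, eval_smul_of_isHomogeneous hf, ha₀]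

lemma eval_eq_zero_of_projPts_subset (hf : f.IsHomogeneous (d + 1))
    (hQ : projPts Q ⊆ hypersurfacePts f) {w : Fin n → F} (hw : w ∈ Q) : eval w f = 0 := by
  by_cases hw₀ : w = 0
  · simpa [hw₀] using eval_smul_of_isHomogeneous hf 0 w
  · rw [← mem_hypersurfacePts_iff_of_submodule_eq hf (Projectivization.submodule_mk w hw₀)]
    refine hQ ?_
    simpa [projPts, Projectivization.submodule_mk] using hw

lemma ncard_hypersurfacePts_inter_projPts_sdiff_mul_card_le [Finite F]
    (hf : f.IsHomogeneous (d + 1)) (hd : d + 1 ≤ Nat.card F) (hQU : Q ⋖ U)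
    (hQ : projPts Q ⊆ hypersurfacePts f) (hU : ¬ projPts U ⊆ hypersurfacePts f) :
    ((hypersurfacePts f ∩ projPts U) \ projPts Q).ncard * Nat.card F ≤
      d * Nat.card F ^ finrank F Q := by
  obtain ⟨φ, hφ₀, hφ₁⟩ := exists_linearMap_of_covBy hQU
  obtain ⟨g, hg, hgf⟩ := exists_isHomogeneous_eval_eq_eval_linearMap hf φ
  have hchart : ∀ P ∈ projPts U \ projPts Q, ∃ x, P.submodule = F ∙ φ (Fin.cons 1 x) := by
    rintro P ⟨hPU, hPQ⟩
    rw [mem_projPts_iff_rep_mem] at hPU hPQ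
    simpa only [P.submodule_eq] using hφ₁ P.rep hPU hPQ
  have hmem {P : Projectivization F (Fin n → F)} {x : Fin (finrank F Q) → F}
      (hx : P.submodule = F ∙ φ (Fin.cons 1 x)) :
      P ∈ hypersurfacePts f ↔ eval (Fin.cons 1 x) g = 0 := by
    rw [mem_hypersurfacePts_iff_of_submodule_eq hf hx, hgf]
  have hvanish (x : Fin (finrank F Q) → F) : eval (Fin.cons 0 x) g = 0 := by
    rw [hgf, eval_eq_zero_of_projPts_subset hf hQ (hφ₀ x)]
  have hne : ∃ x : Fin (finrank F Q) → F, eval (Fin.cons 1 x) g ≠ 0 := by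
    obtain ⟨P, hPU, hPf⟩ := Set.not_subset.1 hU
    obtain ⟨x, hx⟩ := hchart P ⟨hPU, fun hPQ => hPf (hQ hPQ)⟩
    exact ⟨x, fun h => hPf ((hmem hx).2 h)⟩
  refine le_trans (Nat.mul_le_mul_right _ ?_) (ncard_zeros_cons_one_mul_card_le hg hd hvanish hne)
  choose! coord hcoord using hchart
  refine Set.ncard_le_ncard_of_injOn coord ?_ ?_
  · rintro P ⟨⟨hPf, hPU⟩, hPQ⟩
    exact (hmem (hcoord P ⟨hPU, hPQ⟩)).1 hPf
  · rintro P ⟨⟨-, hPU⟩, hPQ⟩ P' ⟨⟨-, hPU'⟩, hPQ'⟩ h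
    refine Projectivization.submodule_injective ?_
    rw [hcoord P ⟨hPU, hPQ⟩, hcoord P' ⟨hPU', hPQ'⟩, h]

/- If `S` meets one of the covers of `Q` only in `Q`, then the others have to account for all of
`S \ Q`. -/
lemma ncard_inter_projPts_sdiff_eq [Finite F] {c : ℕ} {S : Set (Projectivization F (Fin n → F))}
    (hQW' : Q ⋖ W') (hSW' : S ∩ projPts W' ⊆ projPts Q)
    (hle : ∀ U, Q ⋖ U → ((S ∩ projPts U) \ projPts Q).ncard ≤ c)
    (hcard : ({U | Q ⋖ U}.ncard - 1) * c ≤ (S \ projPts Q).ncard) (hQW : Q ⋖ W) (hne : W ≠ W') :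
    ((S ∩ projPts W) \ projPts Q).ncard = c := by
  classical
  have hfin : {U | Q ⋖ U}.Finite := Set.toFinite _
  have hmem {U : Submodule F (Fin n → F)} :
      U ∈ hfin.toFinset.erase W' ↔ U ≠ W' ∧ Q ⋖ U := by simp
  refine ncard_eq_of_subset_biUnion_of_card_mul_le (T := S \ projPts Q)
    (t := hfin.toFinset.erase W') (s := fun U => (S ∩ projPts U) \ projPts Q)
    ?_ (fun U hU => hle U (hmem.1 hU).2) ?_ W (hmem.2 ⟨hne, hQW⟩)
  · rintro P ⟨hPS, hPQ⟩
    obtain ⟨U, hQU, hPU⟩ := exists_covBy_mem_projPts hPQ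
    have hUW' : U ≠ W' := by
      rintro rfl
      exact hPQ (hSW' ⟨hPS, hPU⟩)
    exact Set.mem_biUnion (hmem.2 ⟨hUW', hQU⟩) ⟨⟨hPS, hPU⟩, hPQ⟩
  · rwa [Finset.card_erase_of_mem (by simpa using hQW'), ← Set.ncard_eq_toFinset_card _ hfin]

end ProjectivePoints

theorem stmt_9_general {F : Type} [Field F] [Finite F] {n d k m : ℕ} (hn : n = k + m + 2)
    {f : MvPolynomial (Fin n) F} (hf : f.IsHomogeneous (d + 1)) (hd : d + 1 ≤ Nat.card F)
    (hno : ∀ U : Submodule F (Fin n → F), finrank F U = k + 2 → ¬ projPts U ⊆ hypersurfacePts f)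
    (hcard : ∑ i ∈ Finset.range (k + 1), Nat.card F ^ i +
      (∑ i ∈ Finset.range m, Nat.card F ^ (i + 1)) * (d * Nat.card F ^ k) ≤
        (hypersurfacePts f).ncard)
    {W W' : Submodule F (Fin n → F)} (hW' : finrank F W' = k + 2)
    (hint : (hypersurfacePts f ∩ projPts W').ncard = ∑ i ∈ Finset.range (k + 1), Nat.card F ^ i)
    (hW : finrank F W = k + 2) (hne : W ≠ W')
    (hsub : hypersurfacePts f ∩ projPts W' ⊆ projPts W) :
    (hypersurfacePts f ∩ projPts W).ncard =
      ∑ i ∈ Finset.range (k + 1), Nat.card F ^ i + d * Nat.card F ^ k := by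
  obtain ⟨hQ, hrank⟩ :=
    projPts_inf_eq_and_finrank_inf_eq hW hW' hne hsub Set.inter_subset_right hint
  set Q := W ⊓ W'
  rw [← hQ] at hint
  have hQS : projPts Q ⊆ hypersurfacePts f := hQ ▸ Set.inter_subset_left
  have hQW : Q ⋖ W := covBy_iff_le_and_finrank_eq.2 ⟨inf_le_left, by omega⟩
  have hQW' : Q ⋖ W' := covBy_iff_le_and_finrank_eq.2 ⟨inf_le_right, by omega⟩
  have hquot : finrank F ((Fin n → F) ⧸ Q) = m + 1 := by
    have := Q.finrank_quotient_add_finrank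
    rw [finrank_fin_fun] at this
    omega
  have hbound (U) (hQU : Q ⋖ U) :
      ((hypersurfacePts f ∩ projPts U) \ projPts Q).ncard ≤ d * Nat.card F ^ k := by
    refine Nat.le_of_mul_le_mul_right ?_ (Nat.card_pos (α := F))
    rw [mul_assoc, ← pow_succ, ← hrank]
    exact ncard_hypersurfacePts_inter_projPts_sdiff_mul_card_le hf hd hQU hQS
      (hno U ((covBy_iff_le_and_finrank_eq.1 hQU).2.trans (by rw [hrank])))
  have hout : ({U | Q ⋖ U}.ncard - 1) * (d * Nat.card F ^ k) ≤
      (hypersurfacePts f \ projPts Q).ncard := by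
    rw [ncard_setOf_covBy, hquot, Finset.sum_range_succ', pow_zero, Nat.add_sub_cancel,
      Set.ncard_sdiff hQS, hint]
    omega
  have hWout := ncard_inter_projPts_sdiff_eq hQW' hQ.ge hbound hout hQW hne
  have hQSW : projPts Q ⊆ hypersurfacePts f ∩ projPts W :=
    Set.subset_inter hQS (projPts_mono hQW.le)
  rw [← Set.ncard_sdiff_add_ncard_of_subset hQSW, hWout, hint, add_comm]

/-- Under the hypotheses of the main theorem, with `Π := S ∩ Σ₃` the plane in which the
special solid `Σ₃` meets `S`, every solid containing `Π` other than `Σ₃` meets `S` in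
exactly `q⁵ + q⁴ + q² + 1` rational points. -/
theorem stmt_9 (q : ℕ) (hq : ∃ p k : ℕ, p.Prime ∧ 0 < k ∧ q = p ^ k) (hq2 : 2 < q)
    (F : Type) [Field F] [Fintype F] (hcardF : Fintype.card F = q ^ 2)
    (f : MvPolynomial (Fin 7) F) (hf0 : f ≠ 0) (hfdeg : f.IsHomogeneous (q + 1))
    (S : Set (Projectivization F (Fin 7 → F))) (hS : S = hypersurfacePts f)
    (hnosolid : ¬ ∃ W : Submodule F (Fin 7 → F), Module.finrank F W = 4 ∧ projPts W ⊆ S)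
    (hcardS : S.ncard = q ^ 11 + q ^ 9 + q ^ 7 + q ^ 4 + q ^ 2 + 1)
    (W₃ : Submodule F (Fin 7 → F)) (hW₃ : Module.finrank F W₃ = 4)
    (hint : (S ∩ projPts W₃).ncard = q ^ 4 + q ^ 2 + 1) :
    ∀ W : Submodule F (Fin 7 → F), Module.finrank F W = 4 → W ≠ W₃ →
      S ∩ projPts W₃ ⊆ projPts W →
      (S ∩ projPts W).ncard = q ^ 5 + q ^ 4 + q ^ 2 + 1 := by
  intro W hW hne hsub
  subst hS
  have hF : Nat.card F = q ^ 2 := by rw [Nat.card_eq_fintype_card, hcardF]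
  have hplane : ∑ i ∈ Finset.range 3, Nat.card F ^ i = q ^ 4 + q ^ 2 + 1 := by
    rw [hF]; simp only [Finset.sum_range_succ, Finset.sum_range_zero]; ring
  have hpencil : ∑ i ∈ Finset.range 3, Nat.card F ^ (i + 1) = q ^ 6 + q ^ 4 + q ^ 2 := by
    rw [hF]; simp only [Finset.sum_range_succ, Finset.sum_range_zero]; ring
  have hcount := stmt_9_general (k := 2) (m := 3) rfl hfdeg (by rw [hF]; nlinarith)
    (fun U hU hUS => hnosolid ⟨U, hU, hUS⟩)
    (by rw [hplane, hpencil, hF, hcardS]; apply le_of_eq; ring)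
    hW₃ (hint.trans hplane.symm) hW hne hsub
  rw [hcount, hplane, hF]
  ring
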